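/- Let k be a field, let m ≥ 2 and n ≥ 2, and let R = k[X₁,…,X_m]/(X₁,…,X_m)ⁿ, the quotient of the polynomial ring in m variables by the n-th power of the ideal generated by the variables. Then every reflexive R-module is finitely generated and free. -/

import Mathlib

/-- The ring `R = k[X₁,…,X_m]/(X₁,…,X_m)ⁿ`. -/
abbrev TruncPolyRing (k : Type u) [Field k] (m n : ℕ) : Type u :=
  MvPolynomial (Fin m) k ⧸
    ((Ideal.span (Set.range MvPolynomial.X) : Ideal (MvPolynomial (Fin m) k)) ^ n)

open Module

section abs
variable {k R N : Type u} [Field k] [CommRing R] [Algebra k R] [AddCommGroup N] [Module R N]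
  [Module k N] [IsScalarTower k R N] (𝔪 : Ideal R)

/-- The map `x ↦ φ(x) • τ` for `φ` vanishing on `𝔪N` and a socle element `τ`. -/
def socMap (hdec : ∀ r : R, ∃ c : k, r - algebraMap k R c ∈ 𝔪) (τ : R) (hτ : ∀ a ∈ 𝔪, a * τ = 0)
    (φ : N →ₗ[k] k) (hφ : ∀ x ∈ (𝔪 • ⊤ : Submodule R N), φ x = 0) : N →ₗ[R] R where
  toFun x := φ x • τ
  map_add' x y := by simp [add_smul]
  map_smul' r x := by
    obtain ⟨c, hc⟩ := hdec r
    have h1 : φ (r • x) = c * φ x := by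
      have h2 : r • x = (r - algebraMap k R c) • x + c • x := by
        rw [sub_smul, algebraMap_smul]; abel
      rw [h2, map_add, hφ _ (Submodule.smul_mem_smul hc trivial)]; simp
    have h3 : r * τ = c • τ := by
      have := hτ _ hc
      rw [sub_mul, sub_eq_zero] at this
      rw [this, Algebra.smul_def]
    simp only [h1, RingHom.id_apply, smul_eq_mul]
    rw [mul_smul_comm, h3, mul_comm c, mul_smul]

lemma span_eq_top_of_nil (n : ℕ) (hnil : 𝔪 ^ n = ⊥) (L : Submodule R N)
    (hL : L ⊔ 𝔪 • (⊤ : Submodule R N) = ⊤) : L = ⊤ := by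
  have : ∀ i : ℕ, L ⊔ 𝔪 ^ i • (⊤ : Submodule R N) = ⊤ := by
    intro i
    induction i with
    | zero => simp
    | succ i ih =>
      rw [eq_top_iff]
      calc (⊤ : Submodule R N) = L ⊔ 𝔪 • (⊤ : Submodule R N) := hL.symm
        _ = L ⊔ 𝔪 • (L ⊔ 𝔪 ^ i • (⊤ : Submodule R N)) := by rw [ih]
        _ ≤ _ := by
          rw [Submodule.smul_sup, pow_succ', Submodule.mul_smul]
          refine sup_le le_sup_left (sup_le (le_sup_of_le_left Submodule.smul_le_right) le_sup_right)
  have h := this n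
  rw [hnil] at h
  simpa using h

lemma exists_min_gens (n : ℕ) (hnil : 𝔪 ^ n = ⊥)
    (hdec : ∀ r : R, ∃ c : k, r - algebraMap k R c ∈ 𝔪) :
    ∃ (J : Type u) (e : J → N), Submodule.span R (Set.range e) = ⊤ ∧
      (∀ d : J →₀ R, Finsupp.linearCombination R e d = 0 → ∀ j, d j ∈ 𝔪) ∧
      ∃ (Q : Type u) (_ : AddCommGroup Q) (_ : Module k Q) (π : N →ₗ[k] Q),
        Function.Surjective π ∧ (∀ x ∈ (𝔪 • ⊤ : Submodule R N), π x = 0) ∧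
        Module.rank k Q = Cardinal.mk J := by
  let b := Basis.ofVectorSpace k (N ⧸ (𝔪 • ⊤ : Submodule R N))
  have hs := Submodule.mkQ_surjective (𝔪 • ⊤ : Submodule R N)
  have hsurj : Function.Surjective ((𝔪 • ⊤ : Submodule R N).mkQ.restrictScalars k) := by
    intro y
    obtain ⟨x, hx⟩ := hs y
    exact ⟨x, hx⟩
  have hzero : ∀ x ∈ (𝔪 • ⊤ : Submodule R N),
      (𝔪 • ⊤ : Submodule R N).mkQ.restrictScalars k x = 0 := by
    intro x hx
    rw [LinearMap.restrictScalars_apply, Submodule.mkQ_apply]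
    rwa [Submodule.Quotient.mk_eq_zero]
  choose s hs using hs
  refine ⟨_, fun j => s (b j), ?_, ?_, N ⧸ (𝔪 • ⊤ : Submodule R N),
    inferInstance, inferInstance, (𝔪 • ⊤ : Submodule R N).mkQ.restrictScalars k,
    hsurj, hzero, b.mk_eq_rank''.symm⟩
  · apply span_eq_top_of_nil 𝔪 n hnil
    rw [eq_top_iff]
    rintro x -
    have hx : (𝔪 • ⊤ : Submodule R N).mkQ x ∈ Submodule.span k (Set.range b) := by
      rw [b.span_eq]; trivial
    obtain ⟨c, hc⟩ := (Finsupp.mem_span_range_iff_exists_finsupp).1 hx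
    have h1 : x = c.sum (fun j a => algebraMap k R a • s (b j)) +
        (x - c.sum (fun j a => algebraMap k R a • s (b j))) := by abel
    rw [h1]
    refine Submodule.add_mem_sup ?_ ?_
    · exact Submodule.sum_mem _ fun j _ => Submodule.smul_mem _ _ (Submodule.subset_span ⟨j, rfl⟩)
    · refine (Submodule.Quotient.mk_eq_zero _).1 ?_
      rw [← Submodule.mkQ_apply, map_sub, ← hc, sub_eq_zero, Finsupp.sum, Finsupp.sum, map_sum]
      refine Finset.sum_congr rfl fun j _ => ?_
      rw [map_smul, hs, algebraMap_smul]
  · intro d hd j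
    choose c hc using hdec
    classical
    have hli := b.linearIndependent
    rw [linearIndependent_iff'] at hli
    have h2 : ∑ i ∈ d.support, c (d i) • b i = 0 := by
      have h3 := congrArg (𝔪 • ⊤ : Submodule R N).mkQ hd
      rw [Finsupp.linearCombination_apply, Finsupp.sum, map_sum, map_zero] at h3
      rw [← h3]
      refine Finset.sum_congr rfl fun i _ => ?_
      rw [map_smul, hs, ← algebraMap_smul R (c (d i)), ← sub_eq_zero, ← sub_smul]
      rw [← hs (b i), ← map_smul, Submodule.mkQ_apply]
      refine (Submodule.Quotient.mk_eq_zero _).2 ?_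
      refine Submodule.smul_mem_smul ?_ trivial
      rw [← neg_sub]; exact neg_mem (hc _)
    by_cases hj : j ∈ d.support
    · have := hli _ _ h2 j hj
      have h4 := hc (d j)
      rwa [this, map_zero, sub_zero] at h4
    · rw [Finsupp.notMem_support_iff.1 hj]; exact zero_mem _

lemma rank_dual_le {Q : Type u} [AddCommGroup Q] [Module k Q]
    (hdec : ∀ r : R, ∃ c : k, r - algebraMap k R c ∈ 𝔪) (τ : R) (hτ0 : τ ≠ 0)
    (hτ : ∀ a ∈ 𝔪, a * τ = 0) (π : N →ₗ[k] Q) (hπ : Function.Surjective π)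
    (hπ0 : ∀ x ∈ (𝔪 • ⊤ : Submodule R N), π x = 0) :
    Module.rank k (Dual k Q) ≤ Module.rank k (Dual R N) := by
  let Φ : Dual k Q →ₗ[k] Dual R N :=
    { toFun := fun φ => socMap 𝔪 hdec τ hτ (φ ∘ₗ π)
        (by
          intro x hx
          rw [LinearMap.comp_apply, hπ0 x hx, map_zero])
      map_add' := by intro a b; ext x; simp [socMap, add_smul]
      map_smul' := by intro a b; ext x; simp [socMap, mul_smul] }
  refine LinearMap.rank_le_of_injective Φ ?_
  rw [← LinearMap.ker_eq_bot, LinearMap.ker_eq_bot']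
  intro φ h
  ext x
  obtain ⟨y, rfl⟩ := hπ x
  have := LinearMap.congr_fun h y
  simpa [Φ, socMap, hτ0] using this

lemma rank_aux [Module.Finite k R] {J Q : Type u} [AddCommGroup Q] [Module k Q] (e : J → N)
    (he : Submodule.span R (Set.range e) = ⊤) (hN : ¬ Module.Finite R N)
    (hJ : Module.rank k Q = Cardinal.mk J)
    (h0 : Module.rank k (Dual k Q) ≤ Module.rank k (Dual R N)) :
    Module.rank k N < Module.rank k (Dual R N) := by
  have hinf : Infinite J := by
    by_contra h
    rw [not_infinite_iff_finite] at h
    exact hN ⟨he ▸ Submodule.fg_span (Set.finite_range e)⟩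
  have hal : Cardinal.aleph0 ≤ Cardinal.mk J := Cardinal.aleph0_le_mk J
  have h1 : Module.rank k N ≤ Cardinal.mk J := by
    have hsurj : Function.Surjective ((Finsupp.linearCombination R e).restrictScalars k) := by
      rw [← Finsupp.range_linearCombination] at he
      intro x
      have : x ∈ LinearMap.range (Finsupp.linearCombination R e) := he ▸ trivial
      exact this
    refine (LinearMap.rank_le_of_surjective _ hsurj).trans ?_
    rw [rank_finsupp']
    exact Cardinal.mul_le_of_le hal le_rfl ((Module.rank_lt_aleph0 k R).le.trans hal)
  have h2 : Module.rank k Q <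
      Module.rank k (Dual k Q) := rank_lt_rank_dual (hJ ▸ hal)
  exact (h1.trans_eq hJ.symm).trans_lt (h2.trans_le h0)

lemma rank_lt_dual [Module.Finite k R] [Nontrivial R] (n : ℕ) (hnil : 𝔪 ^ n = ⊥)
    (hdec : ∀ r : R, ∃ c : k, r - algebraMap k R c ∈ 𝔪) (τ : R) (hτ0 : τ ≠ 0)
    (hτ : ∀ a ∈ 𝔪, a * τ = 0) (hN : ¬ Module.Finite R N) :
    Module.rank k N < Module.rank k (Dual R N) := by
  obtain ⟨J, e, he, -, Q, i1, i2, π, hπ, hπ0, hJ⟩ :=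
    exists_min_gens (k := k) (N := N) 𝔪 n hnil hdec
  exact rank_aux e he hN hJ (rank_dual_le 𝔪 hdec τ hτ0 hτ π hπ hπ0)

lemma finite_of_refl [Module.Finite k R] [Nontrivial R] [IsNoetherianRing R] (n : ℕ)
    (hnil : 𝔪 ^ n = ⊥)
    (hdec : ∀ r : R, ∃ c : k, r - algebraMap k R c ∈ 𝔪) (τ : R) (hτ0 : τ ≠ 0)
    (hτ : ∀ a ∈ 𝔪, a * τ = 0) [IsReflexive R N] : Module.Finite R N := by
  by_contra h
  have h1 := rank_lt_dual (k := k) 𝔪 n hnil hdec τ hτ0 hτ h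
  have h2 : ¬ Module.Finite R (Dual R N) := by
    intro hf
    have : Module.Finite R (Dual R (Dual R N)) := inferInstance
    exact h (Module.Finite.equiv (evalEquiv R N).symm)
  have h3 := rank_lt_dual (k := k) 𝔪 n hnil hdec τ hτ0 hτ h2
  have h4 := ((evalEquiv R N).restrictScalars k).rank_eq
  exact absurd (h1.trans h3) (by rw [h4]; exact lt_irrefl _)

end abs

section abs2
variable {k R N : Type u} [Field k] [CommRing R] [Algebra k R] [AddCommGroup N] [Module R N]
  (𝔪 : Ideal R)

/-- Maps from the dual with image in a small principal ideal lie in `𝔪 N*`. -/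
lemma star (hdec : ∀ r : R, ∃ c : k, r - algebraMap k R c ∈ 𝔪) (τ : R)
    (hτ : ∀ a ∈ 𝔪, a * τ = 0) [IsReflexive R N] (x : R) (hx : τ ∉ Ideal.span {x})
    (t : Dual R (Dual R N)) (ht : ∀ f, t f ∈ Ideal.span {x}) :
    t ∈ (𝔪 • ⊤ : Submodule R (Dual R (Dual R N))) := by
  by_contra hcon
  let W : Submodule k (Dual R (Dual R N)) :=
    (𝔪 • ⊤ : Submodule R (Dual R (Dual R N))).restrictScalars k
  obtain ⟨φ, hφ, hφ'⟩ := Submodule.exists_le_ker_of_notMem (p := W) (v := t) hcon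
  let g : Dual R (Dual R (Dual R N)) := socMap 𝔪 hdec τ hτ ((φ t)⁻¹ • φ) (by
    intro y hy
    have : φ y = 0 := hφ' hy
    simp [this])
  have hg : g t = τ := by simp [g, socMap, hφ]
  let f : Dual R N := g ∘ₗ Dual.eval R N
  apply hx
  rw [← hg]
  obtain ⟨y, rfl⟩ := (bijective_dual_eval R N).2 t
  have : Dual.eval R N y f = g (Dual.eval R N y) := rfl
  rw [← this]
  exact ht f

end abs2

section core
variable {P R N J : Type u} [CommRing P] [CommRing R] [AddCommGroup N] [Module R N]

lemma core_nonexist (I : Ideal P) (hI : I ≠ ⊤) (n : ℕ) (hn : 2 ≤ n) (q : P →+* R)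
    (hq : Function.Surjective q) (hker : ∀ p, q p = 0 ↔ p ∈ I ^ n)
    (x : P) (hxI : x ∈ I) (hx : ∀ f a b, f * x ^ a ∈ I ^ (b + a) → f ∈ I ^ b)
    (e : J → N) (he : Submodule.span R (Set.range e) = ⊤)
    (hrel : ∀ d : J →₀ R, Finsupp.linearCombination R e d = 0 → ∀ j, d j ∈ I.map q)
    (hz : ∀ y : N, (q x) ^ (n - 1) • y = 0)
    (hstar : ∀ t : Dual R N, (∀ f, t f ∈ Ideal.span {q x}) →
      t ∈ (I.map q • ⊤ : Submodule R (Dual R N))) : IsEmpty J := by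
  classical
  by_contra hJ
  rw [not_isEmpty_iff] at hJ
  obtain ⟨i0⟩ := hJ
  have hlift : ∀ (i : ℕ) (a : R), a ∈ (I.map q) ^ i ↔ ∃ p ∈ I ^ i, q p = a := by
    intro i a
    rw [← Ideal.map_pow, Ideal.mem_map_iff_of_surjective q hq]
  let Bad : ℕ → Prop := fun p => ∃ d : J →₀ R, Finsupp.linearCombination R e d = 0 ∧
    ∃ j, d j ∉ (I.map q) ^ p
  have hBn : Bad n := by
    refine ⟨Finsupp.single i0 ((q x) ^ (n - 1)), by simp [hz], i0, ?_⟩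
    rw [Finsupp.single_eq_same, hlift]
    rintro ⟨p, hp, hpx⟩
    have h1 : x ^ (n - 1) ∈ I ^ n := by
      rw [← map_pow, ← sub_eq_zero, ← map_sub, hker] at hpx
      have := sub_mem hp hpx
      simpa using this
    have h2 := hx 1 (n - 1) 1 (by rw [one_mul]; convert h1 using 2; omega)
    rw [pow_one] at h2
    exact hI ((Ideal.eq_top_iff_one I).2 h2)
  have hex : ∃ p, Bad p := ⟨n, hBn⟩
  obtain ⟨p', hp', hmin⟩ : ∃ p, Bad p ∧ ∀ r < p, ¬ Bad r :=
    ⟨Nat.find hex, Nat.find_spec hex, fun r hr => Nat.find_min hex hr⟩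
  have hle : p' ≤ n := by
    by_contra h
    exact hmin n (by omega) hBn
  have h2 : 2 ≤ p' := by
    by_contra h
    obtain ⟨d, hd, j, hj⟩ := hp'
    have : p' = 0 ∨ p' = 1 := by omega
    rcases this with rfl | rfl
    · simp at hj
    · rw [pow_one] at hj; exact hj (hrel d hd j)
  obtain ⟨p, rfl⟩ : ∃ p, p' = p + 1 := ⟨p' - 1, by omega⟩
  have hgood : ∀ d : J →₀ R, Finsupp.linearCombination R e d = 0 → ∀ j, d j ∈ (I.map q) ^ p := by
    intro d hd j
    by_contra h
    exact hmin p (by omega) ⟨d, hd, j, h⟩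
  obtain ⟨d, hd, j0, hj0⟩ := hp'
  have hdl : ∀ j, ∃ D ∈ I ^ p, q D = d j := fun j => (hlift _ _).1 (hgood d hd j)
  choose D hDI hD using hdl
  have hdrel : ∀ m : Dual R N, ∑ j ∈ d.support, d j * m (e j) = 0 := by
    intro m
    have := congrArg m hd
    rw [Finsupp.linearCombination_apply, Finsupp.sum, map_sum, map_zero] at this
    simpa using this
  have hclaim : ∀ t ∈ (I.map q • ⊤ : Submodule R (Dual R N)),
      ∃ U : J → P, (∀ j, q (U j) = t (e j)) ∧ ∑ j ∈ d.support, D j * U j ∈ I ^ (n + 1) := by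
    intro t ht
    induction ht using Submodule.smul_induction_on' with
    | smul a ha m _ =>
      obtain ⟨A, hA, rfl⟩ := (Ideal.mem_map_iff_of_surjective q hq).1 ha
      choose W hW using fun j => hq (m (e j))
      refine ⟨fun j => A * W j, fun j => by simp [hW], ?_⟩
      have h3 : ∑ j ∈ d.support, D j * W j ∈ I ^ n := by
        rw [← hker, map_sum, ← hdrel m]
        simp [hW, hD]
      have h4 := Ideal.mul_mem_mul h3 hA
      rw [← pow_succ] at h4
      convert h4 using 1
      rw [Finset.sum_mul]
      exact Finset.sum_congr rfl fun j _ => by ring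
    | add t _ s _ ht hs =>
      obtain ⟨U, hU, hU'⟩ := ht
      obtain ⟨V, hV, hV'⟩ := hs
      refine ⟨U + V, fun j => by simp [hU, hV], ?_⟩
      have := add_mem hU' hV'
      rw [← Finset.sum_add_distrib] at this
      simpa [mul_add] using this
  let π := Finsupp.linearCombination R e
  have hπ : Function.Surjective π := by
    rw [← LinearMap.range_eq_top, Finsupp.range_linearCombination, he]
  let g : (J →₀ R) →ₗ[R] R := (q (x ^ (n - p))) • Finsupp.lapply j0
  have hg : LinearMap.ker π ≤ LinearMap.ker g := by
    intro c hc
    obtain ⟨C, hC, hCc⟩ := (hlift _ _).1 (hgood c hc j0)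
    rw [LinearMap.mem_ker]
    simp only [g, LinearMap.smul_apply, Finsupp.lapply_apply, smul_eq_mul]
    rw [← hCc, ← map_mul, hker]
    have := Ideal.mul_mem_mul (Ideal.pow_mem_pow hxI (n - p)) hC
    rw [← pow_add] at this
    convert this using 2; omega
  let t : Dual R N := (LinearMap.ker π).liftQ g hg ∘ₗ (π.quotKerEquivOfSurjective hπ).symm.toLinearMap
  have ht : ∀ c, t (π c) = g c := by
    intro c
    have : (π.quotKerEquivOfSurjective hπ).symm (π c) = Submodule.Quotient.mk c := by
      rw [LinearEquiv.symm_apply_eq]; rfl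
    simp only [t, LinearMap.comp_apply, LinearEquiv.coe_coe, this]
    rfl
  have hte : ∀ j, t (e j) = if j = j0 then q (x ^ (n - p)) else 0 := by
    intro j
    have h5 : π (Finsupp.single j 1) = e j := by simp [π]
    rw [← h5, ht]
    simp [g, Finsupp.single_apply]
  obtain ⟨U, hU, hU'⟩ := hclaim t (hstar t (by
    intro f
    obtain ⟨c, rfl⟩ := hπ f
    rw [ht]
    simp only [g, LinearMap.smul_apply, Finsupp.lapply_apply, smul_eq_mul, map_pow]
    apply Ideal.mul_mem_right
    exact Ideal.pow_mem_of_mem _ (Ideal.mem_span_singleton_self _) _ (by omega)))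
  have hj0s : j0 ∈ d.support := by
    rw [Finsupp.mem_support_iff]; intro h; apply hj0; rw [h]; exact zero_mem _
  have h6 : ∑ j ∈ d.support, D j * (U j - if j = j0 then x ^ (n - p) else 0) ∈ I ^ (n + 1) := by
    refine Ideal.sum_mem _ fun j _ => ?_
    have h7 : (U j - if j = j0 then x ^ (n - p) else 0) ∈ I ^ n := by
      rw [← hker, map_sub, hU, hte]
      split_ifs <;> simp
    have := Ideal.mul_mem_mul (hDI j) h7
    rw [← pow_add] at this
    exact Ideal.pow_le_pow_right (by omega) this
  have h8 := sub_mem hU' h6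
  rw [← Finset.sum_sub_distrib] at h8
  have h9 : D j0 * x ^ (n - p) ∈ I ^ ((p + 1) + (n - p)) := by
    have e1 : (p + 1) + (n - p) = n + 1 := by omega
    rw [e1]
    convert h8 using 1
    rw [Finset.sum_eq_single_of_mem j0 hj0s]
    · simp; ring
    · intro j _ hj
      simp [hj]
  have h10 := hx _ _ _ h9
  exact hj0 ((hlift _ _).2 ⟨_, h10, hD j0⟩)

end core
section poly
open MvPolynomial
lemma mul_X_pow_mem {σ k : Type*} [Field k] (i : σ) (f : MvPolynomial σ k) (a b : ℕ)
    (h : f * X i ^ a ∈ idealOfVars σ k ^ (b + a)) : f ∈ idealOfVars σ k ^ b := by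
  rw [mem_pow_idealOfVars_iff'] at *
  intro d hd
  have := h (d + Finsupp.single i a) (by simpa using hd)
  rwa [X_pow_eq_monomial, coeff_mul_monomial, mul_one] at this

lemma X_pow_notMem {σ k : Type*} [Field k] (i j : σ) (hij : i ≠ j) (n : ℕ) (hn : 1 ≤ n) (r : MvPolynomial σ k)
    (h : r * X i - X j ^ (n - 1) ∈ idealOfVars σ k ^ n) : False := by
  classical
  rw [mem_pow_idealOfVars_iff'] at h
  have := h (Finsupp.single j (n - 1)) (by rw [Finsupp.degree_single]; omega)
  rw [coeff_sub, coeff_mul_X', coeff_X_pow] at this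
  simp [hij] at this

lemma sub_C_mem {σ k : Type*} [Field k] (r : MvPolynomial σ k) :
   r - C (coeff 0 r) ∈ idealOfVars σ k := by
  classical
  rw [← pow_one (idealOfVars σ k), mem_pow_idealOfVars_iff']
  intro d hd
  have : d = 0 := by simpa [Finsupp.degree_eq_zero_iff] using hd
  subst this
  simp

lemma quot_finite {σ k : Type*} [Finite σ] [Field k] (n : ℕ) :
   Module.Finite k (MvPolynomial σ k ⧸ idealOfVars σ k ^ n) := by
  classical
  have := Fintype.ofFinite σ
  let S : Set (σ →₀ ℕ) := {d | d.degree < n}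
  have hS : S.Finite := by
    refine Set.Finite.subset (Finset.finite_toSet ((Finset.range n).biUnion fun i => Finset.finsuppAntidiag Finset.univ i)) ?_
    intro d hd
    simpa [S, Finsupp.degree_eq_sum] using hd
  have := hS.to_subtype
  refine ⟨⟨(hS.toFinset.image fun d => Ideal.Quotient.mk _ (monomial d 1)), ?_⟩⟩
  rw [eq_top_iff]
  rintro y -
  obtain ⟨f, rfl⟩ := Ideal.Quotient.mk_surjective y
  rw [f.as_sum, map_sum]
  refine Submodule.sum_mem _ fun d _ => ?_
  by_cases hd : d ∈ S
  · have : Ideal.Quotient.mk (idealOfVars σ k ^ n) (monomial d (coeff d f)) = (coeff d f) • Ideal.Quotient.mk (idealOfVars σ k ^ n) (monomial d 1) := by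
      rw [← Ideal.Quotient.mkₐ_eq_mk k, ← map_smul]; simp [smul_monomial]
    rw [this]
    apply Submodule.smul_mem _ _ (Submodule.subset_span _)
    simp only [Finset.coe_image]
    exact ⟨d, by simpa using hd, rfl⟩
  · have : Ideal.Quotient.mk (idealOfVars σ k ^ n) (monomial d (coeff d f)) = 0 := by
      rw [Ideal.Quotient.eq_zero_iff_mem]
      by_cases h0 : coeff d f = 0
      · simp [h0]
      rw [monomial_mem_pow_idealOfVars_iff _ _ h0]
      simpa [S] using hd
    rw [this]; exact zero_mem _
end poly

section ind
variable {k R : Type u} [Field k] [CommRing R] [Algebra k R] (𝔪 : Ideal R)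

lemma free_of_refl (hunit : ∀ r : R, r ∉ 𝔪 → IsUnit r) (z : R) (hz : ∀ a ∈ 𝔪, a * z = 0)
    (hbase : ∀ (M : Type u) [AddCommGroup M] [Module R M] [Module k M] [IsScalarTower k R M],
      IsReflexive R M → (∀ y : M, z • y = 0) → Subsingleton M) (D : ℕ) :
    ∀ (M : Type u) [AddCommGroup M] [Module R M] [Module k M] [IsScalarTower k R M]
      [Module.Finite k M], finrank k M = D → IsReflexive R M → Module.Free R M := by
  induction D using Nat.strong_induction_on with
  | _ D ih =>
  intro M _ _ _ _ _ hD hM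
  by_cases hzM : ∀ y : M, z • y = 0
  · have := hbase M hM hzM
    infer_instance
  push Not at hzM
  obtain ⟨y, hy⟩ := hzM
  obtain ⟨f, hf⟩ : ∃ f : Dual R M, f (z • y) ≠ 0 := by
    by_contra! h
    apply hy
    apply (bijective_dual_eval R M).1
    ext f
    simpa using h f
  have hu : IsUnit (f y) := by
    apply hunit
    intro h
    apply hf
    rw [map_smul, smul_eq_mul, mul_comm]
    exact hz _ h
  obtain ⟨v, hv⟩ := hu.exists_left_inv
  let g : Dual R M := v • f
  have hg : g y = 1 := by simpa [g] using hv
  let s : M →ₗ[R] LinearMap.ker g := LinearMap.codRestrict _ (LinearMap.id - g.smulRight y) (by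
    intro c; simp [hg])
  have hval : ∀ c, (s c : M) = c - g c • y := fun c => rfl
  have hs : s ∘ₗ (LinearMap.ker g).subtype = .id := by
    ext c
    have : g c = 0 := c.2
    simp [hval, this]
  have hrefl : IsReflexive R (LinearMap.ker g) := IsReflexive.of_split _ s hs
  have hlt : finrank k (LinearMap.ker g) < finrank k M := by
    have h1 : (LinearMap.ker g).restrictScalars k < ⊤ := by
      rw [lt_top_iff_ne_top]
      intro h
      have h2 : y ∈ (LinearMap.ker g).restrictScalars k := h ▸ trivial
      have h3 : g y = 0 := h2
      rw [hg] at h3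
      apply hf
      rw [map_smul, smul_eq_mul, ← mul_one z, h3]; simp
    exact Submodule.finrank_lt h1.ne
  have hfin : Module.Finite k (LinearMap.ker g) :=
    inferInstanceAs (Module.Finite k ((LinearMap.ker g).restrictScalars k))
  have hfree : Module.Free R (LinearMap.ker g) := ih _ (hD ▸ hlt) _ rfl hrefl
  let E : (R × LinearMap.ker g) ≃ₗ[R] M := LinearEquiv.ofLinearMap
    ((LinearMap.toSpanSingleton R M y).coprod (LinearMap.ker g).subtype) (g.prod s)
    (by ext c; simp [hval])
    (by
      apply LinearMap.prod_ext
      · ext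
        · simp [hg]
        · have : s y = 0 := Subtype.ext (by simp [hval, hg])
          simp [this]
      · ext c
        · have : g c = 0 := c.2
          simp [this]
        · have h4 : g c = 0 := c.2
          have : s c = c := Subtype.ext (by simp [hval, h4])
          simp [this])
  exact Module.Free.of_equiv E
end ind

theorem stmt4 (k : Type u) [Field k] (m n : ℕ) (hm : 2 ≤ m) (hn : 2 ≤ n)
    (M : Type u) [AddCommGroup M] [Module (TruncPolyRing k m n) M]
    (h : Module.IsReflexive (TruncPolyRing k m n) M) :
    Module.Finite (TruncPolyRing k m n) M ∧ Module.Free (TruncPolyRing k m n) M := by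
  let I : Ideal (MvPolynomial (Fin m) k) := MvPolynomial.idealOfVars (Fin m) k
  let q : MvPolynomial (Fin m) k →+* TruncPolyRing k m n := Ideal.Quotient.mk (I ^ n)
  have hq : Function.Surjective q := Ideal.Quotient.mk_surjective
  have hker : ∀ p, q p = 0 ↔ p ∈ I ^ n := fun p => Ideal.Quotient.eq_zero_iff_mem
  have hfin : Module.Finite k (TruncPolyRing k m n) := quot_finite n
  have hnoeth : IsNoetherianRing (TruncPolyRing k m n) := inferInstance
  let i0 : Fin m := ⟨0, by omega⟩
  let i1 : Fin m := ⟨1, by omega⟩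
  have hi : i0 ≠ i1 := by simp [i0, i1]
  let x : MvPolynomial (Fin m) k := MvPolynomial.X i0
  let y : MvPolynomial (Fin m) k := MvPolynomial.X i1
  have hxI : ∀ i, (MvPolynomial.X i : MvPolynomial (Fin m) k) ∈ I :=
    fun i => Ideal.subset_span ⟨i, rfl⟩
  have hI : I ≠ ⊤ := by
    intro hI
    have h1 : (MvPolynomial.C (1 : k)) ∈ MvPolynomial.idealOfVars (Fin m) k ^ 1 := by
      rw [pow_one]
      change _ ∈ I
      rw [hI]; trivial
    rw [MvPolynomial.C_mem_pow_idealOfVars_iff] at h1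
    simp at h1
  have hmem : ∀ a, a ∈ I.map q ↔ ∃ p ∈ I, q p = a := fun a =>
    Ideal.mem_map_iff_of_surjective q hq
  have hnil : (I.map q) ^ n = ⊥ := by
    rw [← Ideal.map_pow, eq_bot_iff, Ideal.map_le_iff_le_comap]
    intro p hp
    exact (hker p).2 hp
  have hdec : ∀ r : TruncPolyRing k m n, ∃ c : k,
      r - algebraMap k (TruncPolyRing k m n) c ∈ I.map q := by
    intro r
    obtain ⟨p, rfl⟩ := hq r
    exact ⟨MvPolynomial.coeff 0 p, (hmem _).2 ⟨_, sub_C_mem p, by rw [map_sub]; rfl⟩⟩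
  have hsoc : ∀ i, ∀ a ∈ I.map q, a * q (MvPolynomial.X i ^ (n - 1)) = 0 := by
    intro i a ha
    obtain ⟨p, hp, rfl⟩ := (hmem a).1 ha
    rw [← map_mul, hker]
    have := Ideal.mul_mem_mul hp (Ideal.pow_mem_pow (hxI i) (n - 1))
    rw [← pow_succ'] at this
    convert this using 2; omega
  have hy : q (y ^ (n - 1)) ∉ Ideal.span {q x} := by
    intro hy
    obtain ⟨r, hr⟩ := Ideal.mem_span_singleton'.1 hy
    obtain ⟨p, rfl⟩ := hq r
    rw [← map_mul, ← sub_eq_zero, ← map_sub, hker] at hr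
    exact X_pow_notMem i0 i1 hi n (by omega) p hr
  have hy0 : q (y ^ (n - 1)) ≠ 0 := by
    intro h0; apply hy; rw [h0]; exact zero_mem _
  have hnt : Nontrivial (TruncPolyRing k m n) := ⟨_, _, hy0⟩
  have hunit : ∀ r : TruncPolyRing k m n, r ∉ I.map q → IsUnit r := by
    intro r hr
    obtain ⟨c, hc⟩ := hdec r
    have hc0 : c ≠ 0 := by
      rintro rfl
      apply hr; simpa using hc
    have hn1 : IsNilpotent (r - algebraMap k (TruncPolyRing k m n) c) := by
      refine ⟨n, ?_⟩
      have := Ideal.pow_mem_pow hc n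
      rwa [hnil, Ideal.mem_bot] at this
    have hu : IsUnit (algebraMap k (TruncPolyRing k m n) c) := (IsUnit.mk0 c hc0).map _
    have := hn1.isUnit_add_left_of_commute hu (Commute.all _ _)
    simpa using this
  let _ : Module k M := Module.compHom M (algebraMap k (TruncPolyRing k m n))
  have htow : @IsScalarTower k (TruncPolyRing k m n) M Algebra.toSMul _ _ :=
    IsScalarTower.of_algebraMap_smul fun r x => rfl
  have hMfin : Module.Finite (TruncPolyRing k m n) M :=
    finite_of_refl (k := k) (I.map q) n hnil hdec _ hy0 (hsoc i1)
  have hMk : Module.Finite k M := Module.Finite.trans (TruncPolyRing k m n) M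
  refine ⟨hMfin, free_of_refl (k := k) (I.map q) hunit (q (x ^ (n - 1))) (hsoc i0) ?_ _ M rfl h⟩
  intro M' _ _ _ _ hM' hz
  obtain ⟨J, e, he, hrel, -⟩ :=
    exists_min_gens (k := k) (N := Dual (TruncPolyRing k m n) M') (I.map q) n hnil hdec
  have hJ : IsEmpty J := by
    refine core_nonexist I hI n hn q hq hker x (hxI i0) (fun f a b => mul_X_pow_mem i0 f a b)
      e he hrel ?_ ?_
    · intro f
      ext w
      have := congrArg f (hz w)
      rw [map_smul, map_zero, map_pow] at this
      simpa using this
    · intro t ht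
      exact star (k := k) (I.map q) hdec _ (hsoc i1) (q x) hy t ht
  have hsub : Subsingleton (Dual (TruncPolyRing k m n) M') := by
    rw [Set.range_eq_empty e, Submodule.span_empty] at he
    exact (Submodule.subsingleton_iff _).1 (subsingleton_of_bot_eq_top he)
  refine ⟨fun a b => (bijective_dual_eval (TruncPolyRing k m n) M').1 ?_⟩
  ext f
  rw [Subsingleton.elim f 0]
  simp
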